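/- For every a > 0 and b ∈ (0,1), the map F_{a,b} preserves the open triangle below the diagonal: if (x,y) ∈ [0,1]² with x > y and F_{a,b}(x,y) = (x̂, ŷ), then x̂ > ŷ. -/

import Mathlib

/-- The two-dimensional map `F_{a,b}`. -/
noncomputable def chaosMap2 (a b : ℝ) : ℝ × ℝ → ℝ × ℝ :=
  fun p => (p.1 / (p.1 + (1 - p.1) * Real.exp (a * (p.2 - b))),
            p.2 / (p.2 + (1 - p.2) * Real.exp (a * (p.1 - b))))

/-!
Each coordinate of `F_{a,b}` divides the odds `x / (1 - x)` of one coordinate by an exponential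
weight in the other. Dividing odds is strictly increasing in the point and decreasing in the weight.
When `y < x`, the larger point `x` also gets the smaller weight `exp (a * (y - b))`, so both effects
push `x̂` above `ŷ`.
-/

section DivOdds

variable {𝕜 : Type*} [Field 𝕜]

/-- The point of `[0, 1]` whose odds are the odds `x / (1 - x)` of `x` divided by the weight `w`.
The closed form also covers `x = 1`, where the odds are infinite. -/
def divOdds (w x : 𝕜) : 𝕜 :=
  x / (x + (1 - x) * w)

variable [LinearOrder 𝕜] [IsStrictOrderedRing 𝕜] {w x : 𝕜}

lemma add_one_sub_mul_pos (hw : 0 < w) (hx : x ∈ Set.Icc 0 1) : 0 < x + (1 - x) * w := by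
  simpa only [smul_eq_mul, mul_one, Set.mem_Ioi] using
    convex_Ioi (0 : 𝕜) one_pos hw hx.1 (sub_nonneg.2 hx.2) (add_sub_cancel x 1)

lemma strictMonoOn_divOdds (hw : 0 < w) : StrictMonoOn (divOdds w) (Set.Icc 0 1) := by
  intro y hy x hx hyx
  have cross_lt : y * (1 - x) * w < x * (1 - y) * w :=
    mul_lt_mul_of_pos_right (by linarith) hw
  rw [divOdds, divOdds, div_lt_div_iff₀ (add_one_sub_mul_pos hw hy) (add_one_sub_mul_pos hw hx)]
  linarith

lemma antitoneOn_divOdds_weight (hx : x ∈ Set.Icc 0 1) :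
    AntitoneOn (fun w ↦ divOdds w x) (Set.Ioi 0) := by
  intro v hv w _ hvw
  have one_sub_nonneg : 0 ≤ 1 - x := sub_nonneg.2 hx.2
  exact div_le_div_of_nonneg_left hx.1 (add_one_sub_mul_pos hv hx) (by gcongr)

end DivOdds

theorem stmt_17_general {a : ℝ} (ha : 0 ≤ a) (b : ℝ) {x y : ℝ}
    (hx : x ∈ Set.Icc (0 : ℝ) 1) (hy : y ∈ Set.Icc (0 : ℝ) 1) (hxy : y < x) :
    (chaosMap2 a b (x, y)).2 < (chaosMap2 a b (x, y)).1 := by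
  have weight_le : Real.exp (a * (y - b)) ≤ Real.exp (a * (x - b)) := by gcongr
  calc (chaosMap2 a b (x, y)).2
      = divOdds (Real.exp (a * (x - b))) y := rfl
    _ < divOdds (Real.exp (a * (x - b))) x := strictMonoOn_divOdds (Real.exp_pos _) hy hx hxy
    _ ≤ divOdds (Real.exp (a * (y - b))) x :=
        antitoneOn_divOdds_weight hx (Real.exp_pos _) (Real.exp_pos _) weight_le
    _ = (chaosMap2 a b (x, y)).1 := rfl

/-- For every `a > 0` and `b ∈ (0,1)`, the map `F_{a,b}` preserves the open
triangle below the diagonal: if `x > y` then `x̂ > ŷ`. -/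
theorem stmt_17 (a b : ℝ) (ha : 0 < a) (hb : b ∈ Set.Ioo (0 : ℝ) 1)
    (x y : ℝ) (hx : x ∈ Set.Icc (0 : ℝ) 1) (hy : y ∈ Set.Icc (0 : ℝ) 1)
    (hxy : y < x) :
    (chaosMap2 a b (x, y)).2 < (chaosMap2 a b (x, y)).1 :=
  stmt_17_general ha.le b hx hy hxy
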